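/- arXiv:1512.03091 — 4 statements merged into one kernel-verified Lean document; each statement's English description precedes it below -/
import Mathlib

section
/- Let B be a commutative noetherian ring and I an ideal of B with I² = 0, and set A = B/I (a noetherian ring). Let M' be a B-module and let M = M'/IM', regarded as an A-module. Since I² = 0, the ideal I is naturally an A-module. Then M' is flat over B if and only if M is flat over A and the natural map M ⊗_A I → M', induced by (m mod IM') ⊗ x ↦ x·m, is injective. -/
/-! Since `I ^ 2 = 0`, both `I` and `B ⧸ I` are modules over `A = B ⧸ I`, and for an `A`-module `N`
one has `N ⊗[B] M' ≃ N ⊗[A] M` with `M = M'/IM'`. Hence the natural map `M ⊗[A] I → M'` is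
identified with `I ⊗[B] M' → M'` (`squareZeroTensorMap_injective_iff`), and if `M` is `A`-flat,
`- ⊗[B] M'` preserves injections between modules killed by `I`
(`rTensor_injective_of_isTorsionBySet`).

If `M'` is flat, `M` is flat by base change and `I ⊗[B] M' → M'` is injective. Conversely, let `J`
be an ideal and let `t ∈ J ⊗[B] M'` map to `0` in `M'`. The image `J̄` of `J` in `A` satisfies
`J̄ ⊗[B] M' ↪ A ⊗[B] M'`, so `t` maps to `0` in `J̄ ⊗[B] M'`, and right exactness lifts `t` to
`(J ⊓ I) ⊗[B] M'`. This last module embeds in `I ⊗[B] M'`, which embeds in `M'`, so `t = 0`.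
-/
open TensorProduct

section SquareZero

variable {B : Type*} [CommRing B] {I : Ideal B}

/-- If `I ^ 2 = 0`, then `I` is torsion by `I`, hence naturally a `B ⧸ I`-module. -/
theorem Ideal.isTorsionBySet_self_of_sq_eq_bot (hI : I ^ 2 = ⊥) :
    Module.IsTorsionBySet B I (I : Set B) := by
  intro x a
  refine Subtype.ext ?_
  have : (a : B) * (x : B) ∈ I ^ 2 := by
    rw [sq]; exact Ideal.mul_mem_mul a.2 x.2
  rw [hI] at this
  simpa using this

variable (M' : Type*) [AddCommGroup M'] [Module B M']

/-- The natural map `(M'/IM') ⊗_{B/I} I → M'` induced by `(m mod IM') ⊗ x ↦ x • m`,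
where `I` carries its natural `B ⧸ I`-module structure coming from `I ^ 2 = 0`. -/
noncomputable def squareZeroTensorMap (hI : I ^ 2 = ⊥) :
    letI : Module (B ⧸ I) I := (Ideal.isTorsionBySet_self_of_sq_eq_bot hI).module
    ((M' ⧸ (I • ⊤ : Submodule B M')) ⊗[B ⧸ I] I) →+ M' := by
  letI : Module (B ⧸ I) I := (Ideal.isTorsionBySet_self_of_sq_eq_bot hI).module
  -- the `B`-bilinear pairing `M' → I → M'`, `(m, x) ↦ x • m`
  have hker : (I • ⊤ : Submodule B M') ≤
      LinearMap.ker (((LinearMap.lsmul B M').comp I.subtype).flip) := by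
    intro m hm
    rw [LinearMap.mem_ker]
    ext x
    refine Submodule.smul_induction_on hm ?_ ?_
    · intro a ha n _
      have h0 : (x : B) * a = 0 := by
        have h2 : (x : B) * a ∈ I ^ 2 := by rw [sq]; exact Ideal.mul_mem_mul x.2 ha
        rw [hI] at h2
        exact (Submodule.mem_bot B).mp h2
      simp only [LinearMap.flip_apply, LinearMap.comp_apply, Submodule.coe_subtype,
        LinearMap.lsmul_apply, LinearMap.zero_apply, smul_smul, h0, zero_smul]
    · intro y z hy hz
      simp only [LinearMap.flip_apply, LinearMap.comp_apply, Submodule.coe_subtype,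
        LinearMap.lsmul_apply, LinearMap.zero_apply, smul_add] at hy hz ⊢
      rw [hy, hz, add_zero]
  refine TensorProduct.liftAddHom
    { toFun := fun m =>
        ((Submodule.liftQ (I • ⊤ : Submodule B M')
          (((LinearMap.lsmul B M').comp I.subtype).flip) hker) m).toAddMonoidHom
      map_zero' := by ext x; simp
      map_add' := by intro m n; ext x; simp } ?_
  · intro a m x
    obtain ⟨b, rfl⟩ := Ideal.Quotient.mk_surjective a
    obtain ⟨m', rfl⟩ := Submodule.Quotient.mk_surjective _ m
    show ((Submodule.liftQ _ _ hker) ((Ideal.Quotient.mk I b) •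
        Submodule.Quotient.mk m')) x = _
    rw [Module.Quotient.mk_smul_mk]
    show (x : B) • (b • m') = ((Ideal.Quotient.mk I b • x : I) : B) • m'
    rw [(Ideal.isTorsionBySet_self_of_sq_eq_bot hI).mk_smul]
    show (x : B) • (b • m') = (b • (x : B)) • m'
    rw [smul_smul, smul_eq_mul, mul_comm]


/-- The canonical isomorphism `(B ⧸ I) ⊗[B] M' ≃ M'/IM'`, as a `B ⧸ I`-linear map. -/
noncomputable def quotTensorEquivSMulTop {B : Type*} [CommRing B] (I : Ideal B)
    (M' : Type*) [AddCommGroup M'] [Module B M'] :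
    (B ⧸ I) ⊗[B] M' ≃ₗ[B ⧸ I] (M' ⧸ (I • ⊤ : Submodule B M')) :=
  (quotTensorEquivQuotSMul M' I).extendScalarsOfSurjective Ideal.Quotient.mk_surjective

theorem quotTensorEquivSMulTop_one_tmul {B : Type*} [CommRing B] (I : Ideal B)
    (M' : Type*) [AddCommGroup M'] [Module B M'] (m : M') :
    quotTensorEquivSMulTop I M' (1 ⊗ₜ m) = Submodule.Quotient.mk m :=
  quotTensorEquivQuotSMul_mk_one_tmul I m

/-- If `M'/IM'` is flat over `B ⧸ I`, tensoring with `M'` over `B` preserves injections between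
modules killed by `I`: on such modules `N ⊗[B] M' ≃ N ⊗[B ⧸ I] ((B ⧸ I) ⊗[B] M')`. -/
theorem rTensor_injective_of_isTorsionBySet {B : Type*} [CommRing B] {I : Ideal B}
    {M' : Type*} [AddCommGroup M'] [Module B M']
    [Module.Flat (B ⧸ I) (M' ⧸ (I • ⊤ : Submodule B M'))]
    {N P : Type*} [AddCommGroup N] [Module B N] [AddCommGroup P] [Module B P]
    (hP : Module.IsTorsionBySet B P (I : Set B)) (f : N →ₗ[B] P) (hf : Function.Injective f) :
    Function.Injective (f.rTensor M') := by
  have hN : Module.IsTorsionBySet B N (I : Set B) := fun x a => hf (by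
    rw [map_smul, map_zero]; exact @hP (f x) a)
  let _ : Module (B ⧸ I) N := hN.module
  let _ : Module (B ⧸ I) P := hP.module
  have : IsScalarTower B (B ⧸ I) N := hN.isScalarTower
  have : IsScalarTower B (B ⧸ I) P := hP.isScalarTower
  have : Module.Flat (B ⧸ I) ((B ⧸ I) ⊗[B] M') :=
    Module.Flat.of_linearEquiv (quotTensorEquivSMulTop I M')
  let f' : N →ₗ[B ⧸ I] P := f.extendScalarsOfSurjective Ideal.Quotient.mk_surjective
  have h1 : Function.Injective (f'.rTensor ((B ⧸ I) ⊗[B] M')) :=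
    Module.Flat.rTensor_preserves_injective_linearMap f' hf
  let eN := AlgebraTensorModule.cancelBaseChange B (B ⧸ I) (B ⧸ I) N M'
  let eP := AlgebraTensorModule.cancelBaseChange B (B ⧸ I) (B ⧸ I) P M'
  have h2 : ∀ t, f.rTensor M' t = eP (f'.rTensor ((B ⧸ I) ⊗[B] M') (eN.symm t)) := by
    intro t
    induction t with
    | zero => simp
    | add x y hx hy => simp only [map_add, hx, hy]
    | tmul n m => simp [eN, eP, f']
  intro x y hxy
  rw [h2, h2] at hxy
  exact eN.symm.injective (h1 (eP.injective hxy))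

/-- The source of `squareZeroTensorMap` is `I ⊗[B] M'`, so its injectivity is the `J = I` case of
the ideal criterion for flatness of `M'`. -/
theorem squareZeroTensorMap_injective_iff {B : Type*} [CommRing B] {I : Ideal B}
    (hI : I ^ 2 = ⊥) (M' : Type*) [AddCommGroup M'] [Module B M'] :
    Function.Injective (squareZeroTensorMap M' hI) ↔
      Function.Injective (LinearMap.rTensor M' I.subtype) := by
  let _ : Module (B ⧸ I) I := (Ideal.isTorsionBySet_self_of_sq_eq_bot hI).module
  have : IsScalarTower B (B ⧸ I) I := (Ideal.isTorsionBySet_self_of_sq_eq_bot hI).isScalarTower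
  let e : I ⊗[B] M' ≃ₗ[B ⧸ I] (M' ⧸ (I • ⊤ : Submodule B M')) ⊗[B ⧸ I] I :=
    (AlgebraTensorModule.cancelBaseChange B (B ⧸ I) (B ⧸ I) I M').symm ≪≫ₗ
      (TensorProduct.congr (LinearEquiv.refl _ _) (quotTensorEquivSMulTop I M')) ≪≫ₗ
      TensorProduct.comm _ _ _
  have h : ∀ t, squareZeroTensorMap M' hI (e t) =
      TensorProduct.lid B M' (LinearMap.rTensor M' I.subtype t) := by
    intro t
    induction t with
    | zero => simp
    | add x y hx hy => simp only [map_add, hx, hy]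
    | tmul x m =>
      have he : e (x ⊗ₜ m) = Submodule.Quotient.mk m ⊗ₜ x := by
        simp [e, quotTensorEquivSMulTop_one_tmul]
      rw [he]
      simp only [LinearMap.rTensor_tmul, Submodule.coe_subtype, TensorProduct.lid_tmul]
      rfl
  constructor
  · intro hs x y hxy
    apply e.injective
    apply hs
    rw [h, h, hxy]
  · intro hs x y hxy
    obtain ⟨x, rfl⟩ := e.surjective x
    obtain ⟨y, rfl⟩ := e.surjective y
    rw [h, h] at hxy
    rw [hs ((TensorProduct.lid B M').injective hxy)]

/-- Flatness criterion over a square-zero extension: let `B` be a noetherian commutative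
ring, `I ⊆ B` an ideal with `I² = 0`, `A = B ⧸ I`, `M'` a `B`-module and `M = M'/IM'`.
Then `M'` is flat over `B` iff `M` is flat over `A` and the natural map `M ⊗_A I → M'`
(induced by `(m mod IM') ⊗ x ↦ x • m`) is injective. -/
theorem Module.flat_iff_of_square_zero (B : Type*) [CommRing B] [IsNoetherianRing B]
    (I : Ideal B) (hI : I ^ 2 = ⊥) (M' : Type*) [AddCommGroup M'] [Module B M'] :
    Module.Flat B M' ↔
      Module.Flat (B ⧸ I) (M' ⧸ (I • ⊤ : Submodule B M')) ∧
        Function.Injective (squareZeroTensorMap M' hI) := by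
  constructor
  · intro _
    refine ⟨?_, (squareZeroTensorMap_injective_iff hI M').2
      (Module.Flat.rTensor_preserves_injective_linearMap _ I.subtype_injective)⟩
    exact Module.Flat.of_linearEquiv (quotTensorEquivSMulTop I M').symm
  · rintro ⟨_, hinj⟩
    rw [squareZeroTensorMap_injective_iff] at hinj
    rw [Module.Flat.iff_rTensor_injective']
    intro J
    rw [injective_iff_map_eq_zero]
    intro t ht
    -- `p : J → B ⧸ I` has range the image of `J` in `B ⧸ I` and kernel `J ⊓ I`
    let p : J →ₗ[B] B ⧸ I := (Submodule.mkQ I).comp J.subtype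
    let i : (J ⊓ I : Ideal B) →ₗ[B] J := Submodule.inclusion inf_le_left
    let k : (J ⊓ I : Ideal B) →ₗ[B] I := Submodule.inclusion inf_le_right
    have hquot : Module.IsTorsionBySet B (B ⧸ I) (I : Set B) :=
      fun x a => by
        obtain ⟨y, rfl⟩ := Submodule.Quotient.mk_surjective _ x
        exact (Submodule.Quotient.mk_eq_zero I).2 (I.mul_mem_right y a.2)
    have hexact : Function.Exact i p.rangeRestrict := by
      intro x
      rw [← Subtype.coe_inj]
      change (Submodule.Quotient.mk (x : B) : B ⧸ I) = 0 ↔ _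
      rw [Submodule.Quotient.mk_eq_zero]
      exact ⟨fun hx => ⟨⟨x, x.2, hx⟩, rfl⟩, by rintro ⟨y, rfl⟩; exact y.2.2⟩
    have hpt : p.rangeRestrict.rTensor M' t = 0 := by
      apply rTensor_injective_of_isTorsionBySet (M' := M') hquot p.range.subtype
        p.range.subtype_injective
      rw [map_zero, ← LinearMap.comp_apply, ← LinearMap.rTensor_comp,
        LinearMap.subtype_comp_codRestrict, LinearMap.rTensor_comp, LinearMap.comp_apply, ht,
        map_zero]
    obtain ⟨s, rfl⟩ := (rTensor_exact M' hexact p.surjective_rangeRestrict t).1 hpt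
    have hs : s = 0 := by
      apply rTensor_injective_of_isTorsionBySet (M' := M')
        (Ideal.isTorsionBySet_self_of_sq_eq_bot hI) k (Submodule.inclusion_injective _)
      apply hinj
      rw [map_zero, map_zero, ← ht, ← LinearMap.comp_apply, ← LinearMap.comp_apply,
        ← LinearMap.rTensor_comp, ← LinearMap.rTensor_comp]
      rfl
    rw [hs, map_zero]

end SquareZero
end

section
/- Let d ≥ 1 be an integer, let r and s be positive integers, let ε ∈ {0,1}, and let c be a positive rational number. Let P, Q ∈ ℚ[x] be polynomials of degree d with leading coefficients r·c and s·c respectively, and let δ ∈ ℚ[x] be a polynomial with positive leading coefficient and deg δ ≥ d. Then Q(m)/s + ε·δ(m)/s < P(m)/r + δ(m)/r for all sufficiently large integers m if and only if Q(m)/(2s − ε) < P(m)/(2r − 1) for all sufficiently large integers m. -/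
/-!
Clearing the positive denominators, the two inequalities say that the polynomials
`F = s P - r Q + t δ` and `G = (2 s - ε) P - (2 r - 1) Q`, where `t = s - ε r`, are positive at all
large integers. Since `r c` and `s c` are the leading coefficients of `P` and `Q`, the polynomial
`s P - r Q` has degree below `d`, so the coefficient of `F` in degree `deg δ` is `t` times the
leading coefficient of `δ`, while the coefficient of `G` in degree `d` is `t c`. If `t ≠ 0`,
both conditions are therefore equivalent to `0 < t`. If `t = 0`, then `ε = 1` and `r = s`, and both
inequalities reduce to `Q(m) < P(m)`.
-/

open Polynomial Filter in
/-- A polynomial whose coefficient in the (formal) top degree `n ≥ 1` is positive is eventually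
positive on the integers. -/
lemma eventually_eval_pos (F : ℚ[X]) (n : ℕ) (hn : 1 ≤ n) (hF : F.natDegree ≤ n)
    (h : 0 < F.coeff n) : ∃ N : ℤ, ∀ m : ℤ, N ≤ m → 0 < F.eval (m : ℚ) := by
  have hdeg : F.natDegree = n := le_antisymm hF (le_natDegree_of_ne_zero h.ne')
  have hlim : Tendsto (fun x : ℚ => F.eval x) atTop atTop := by
    apply F.tendsto_atTop_of_leadingCoeff_nonneg
    · exact natDegree_pos_iff_degree_pos.mp (by lia)
    · rw [leadingCoeff, hdeg]
      exact h.le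
  exact eventually_atTop.mp
    ((hlim.comp tendsto_intCast_atTop_atTop).eventually (eventually_gt_atTop 0))

open Polynomial in
/-- If the coefficient in the (formal) top degree `n ≥ 1` is nonzero, its sign decides eventual
positivity on the integers. -/
lemma eventually_eval_pos_iff (F : ℚ[X]) (n : ℕ) (hn : 1 ≤ n) (hF : F.natDegree ≤ n)
    (h : F.coeff n ≠ 0) :
    (∃ N : ℤ, ∀ m : ℤ, N ≤ m → 0 < F.eval (m : ℚ)) ↔ 0 < F.coeff n := by
  refine ⟨fun ⟨N, hN⟩ => ?_, eventually_eval_pos F n hn hF⟩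
  by_contra hneg
  obtain ⟨M, hM⟩ := eventually_eval_pos (-F) n hn (by rwa [natDegree_neg])
    (by rw [coeff_neg]; exact neg_pos.mpr (lt_of_le_of_ne (not_lt.mp hneg) h))
  have h1 := hN (max N M) (le_max_left _ _)
  have h2 := hM (max N M) (le_max_right _ _)
  rw [eval_neg] at h2
  linarith


/-- Numerical content of Lemma `ReIntSS`: let `d ≥ 1`, `r, s` positive integers,
`ε ∈ {0,1}`, `c > 0` rational, `P, Q ∈ ℚ[x]` of degree `d` with leading coefficients
`r·c` and `s·c`, and `δ ∈ ℚ[x]` with positive leading coefficient and `deg δ ≥ d`.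
Then `Q(m)/s + ε·δ(m)/s < P(m)/r + δ(m)/r` for all sufficiently large integers `m`
iff `Q(m)/(2s - ε) < P(m)/(2r - 1)` for all sufficiently large integers `m`. -/
theorem reinterpret_stability (d : ℕ) (hd : 1 ≤ d) (r s : ℕ) (hr : 0 < r) (hs : 0 < s)
    (ε : ℕ) (hε : ε = 0 ∨ ε = 1) (c : ℚ) (hc : 0 < c) (P Q δ : Polynomial ℚ)
    (hPdeg : P.degree = (d : ℕ)) (hQdeg : Q.degree = (d : ℕ))
    (hPlead : P.leadingCoeff = r * c) (hQlead : Q.leadingCoeff = s * c)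
    (hδ : 0 < δ.leadingCoeff) (hδdeg : (d : ℕ) ≤ δ.natDegree) :
    (∃ N : ℤ, ∀ m : ℤ, N ≤ m →
        Q.eval (m : ℚ) / s + ε * δ.eval (m : ℚ) / s < P.eval (m : ℚ) / r + δ.eval (m : ℚ) / r)
    ↔ (∃ N : ℤ, ∀ m : ℤ, N ≤ m →
        Q.eval (m : ℚ) / (2 * s - ε) < P.eval (m : ℚ) / (2 * r - 1)) := by
  have hr1 : (1 : ℚ) ≤ r := by exact_mod_cast hr
  have hs1 : (1 : ℚ) ≤ s := by exact_mod_cast hs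
  have hε1 : (ε : ℚ) ≤ 1 := by rcases hε with rfl | rfl <;> norm_num
  have hr0 : (0 : ℚ) < r := by linarith
  have hs0 : (0 : ℚ) < s := by linarith
  have hA : (0 : ℚ) < 2 * s - ε := by linarith
  have hB : (0 : ℚ) < 2 * r - 1 := by linarith
  have hPn : P.natDegree = d := Polynomial.natDegree_eq_of_degree_eq_some hPdeg
  have hQn : Q.natDegree = d := Polynomial.natDegree_eq_of_degree_eq_some hQdeg
  have hPc : P.coeff d = r * c := by rw [← hPlead, Polynomial.leadingCoeff, hPn]
  have hQc : Q.coeff d = s * c := by rw [← hQlead, Polynomial.leadingCoeff, hQn]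
  set t : ℚ := s - ε * r with ht
  let F : Polynomial ℚ :=
    Polynomial.C (s : ℚ) * P - Polynomial.C (r : ℚ) * Q + Polynomial.C t * δ
  let G : Polynomial ℚ :=
    Polynomial.C (2 * s - ε : ℚ) * P - Polynomial.C (2 * r - 1 : ℚ) * Q
  have hFiff : ∀ x : ℚ, Q.eval x / s + ε * δ.eval x / s < P.eval x / r + δ.eval x / r ↔
      0 < F.eval x := by
    intro x
    rw [← add_div, ← add_div, div_lt_div_iff₀ hs0 hr0, ← sub_pos]
    simp only [F, Polynomial.eval_add, Polynomial.eval_sub, Polynomial.eval_mul,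
      Polynomial.eval_C, ht]
    ring_nf
  have hGiff : ∀ x : ℚ, Q.eval x / (2 * s - ε) < P.eval x / (2 * r - 1) ↔ 0 < G.eval x := by
    intro x
    rw [div_lt_div_iff₀ hA hB, ← sub_pos]
    simp only [G, Polynomial.eval_sub, Polynomial.eval_mul, Polynomial.eval_C]
    ring_nf
  simp only [hFiff, hGiff]
  by_cases ht0 : t = 0
  · have hε' : ε = 1 := by
      rcases hε with rfl | rfl
      · simp [ht] at ht0
        lia
      · rfl
    have hsr : (s : ℚ) = r := by
      rw [ht, hε'] at ht0
      push_cast at ht0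
      linarith
    have hFG : ∀ x : ℚ, 0 < F.eval x ↔ 0 < G.eval x := by
      intro x
      have e1 : F.eval x = r * (P.eval x - Q.eval x) := by
        simp only [F, Polynomial.eval_add, Polynomial.eval_sub, Polynomial.eval_mul,
          Polynomial.eval_C, ht0, hsr]
        ring
      have e2 : G.eval x = (2 * r - 1) * (P.eval x - Q.eval x) := by
        simp only [G, Polynomial.eval_sub, Polynomial.eval_mul, Polynomial.eval_C, hsr, hε']
        push_cast
        ring
      rw [e1, e2, mul_pos_iff_of_pos_left hr0, mul_pos_iff_of_pos_left hB]
    simp only [hFG]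
  · have hFd : F.natDegree ≤ δ.natDegree := by
      refine Polynomial.natDegree_add_le_of_degree_le (Polynomial.natDegree_sub_le_of_le
        ?_ ?_ |>.trans (max_self _).le) (Polynomial.natDegree_C_mul_le _ _)
      · exact (Polynomial.natDegree_C_mul_le _ _).trans (by lia)
      · exact (Polynomial.natDegree_C_mul_le _ _).trans (by lia)
    have hGd : G.natDegree ≤ d := by
      refine Polynomial.natDegree_sub_le_of_le ?_ ?_ |>.trans (max_self _).le
      · exact (Polynomial.natDegree_C_mul_le _ _).trans hPn.le
      · exact (Polynomial.natDegree_C_mul_le _ _).trans hQn.le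
    -- `s P - r Q` contributes nothing in degree `deg δ`, whether `deg δ = d` or `deg δ > d`.
    have hFc : F.coeff δ.natDegree = t * δ.leadingCoeff := by
      simp only [F, Polynomial.coeff_add, Polynomial.coeff_sub, Polynomial.coeff_C_mul,
        Polynomial.coeff_natDegree]
      rcases hδdeg.eq_or_lt with h | h
      · rw [← h, hPc, hQc]
        ring
      · rw [Polynomial.coeff_eq_zero_of_natDegree_lt (by lia : P.natDegree < _),
          Polynomial.coeff_eq_zero_of_natDegree_lt (by lia : Q.natDegree < _)]
        ring
    have hGc : G.coeff d = t * c := by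
      simp only [G, Polynomial.coeff_sub, Polynomial.coeff_C_mul, hPc, hQc, ht]
      ring
    rw [eventually_eval_pos_iff F _ (hd.trans hδdeg) hFd (by rw [hFc]; exact mul_ne_zero ht0 hδ.ne'),
      eventually_eval_pos_iff G d hd hGd (by rw [hGc]; exact mul_ne_zero ht0 hc.ne'),
      hFc, hGc, mul_pos_iff_of_pos_right hδ, mul_pos_iff_of_pos_right hc]
end

section
/- Let d ≥ 1 be an integer, let r and s be positive integers, let ε ∈ {0,1}, and let c be a positive rational number. Let P, Q ∈ ℚ[x] be polynomials of degree d with leading coefficients r·c and s·c respectively, and let δ ∈ ℚ[x] be a polynomial with positive leading coefficient and deg δ ≥ d. Then Q(m)/s + ε·δ(m)/s ≤ P(m)/r + δ(m)/r for all sufficiently large integers m if and only if Q(m)/(2s − ε) ≤ P(m)/(2r − 1) for all sufficiently large integers m. -/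
/-!
Both inequalities assert that a polynomial is eventually nonnegative: the difference of the two
sides. On the left this is `A = P/r + δ/r - Q/s - εδ/s`; since `P/r` and `Q/s` both have leading
term `c x^d` and `deg δ ≥ d`, the coefficient of `A` in degree `deg δ` is
`lead(δ) (s - ε r) / (r s)`. On the right it is `B = P/(2r-1) - Q/(2s-ε)`, whose coefficient in
degree `d` is `c (s - ε r) / ((2r-1)(2s-ε))`. Both signs are thus that of `s - ε r`: if it is
nonzero, the two conditions are both true or both false (`eventually_eval_pos`,
`not_eventually_eval_nonneg`). If it vanishes,
then `ε = 1` and `r = s`, and both conditions say `Q(m) ≤ P(m)` for large `m`.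
-/

/-- The top coefficient is given as `A.coeff n` with `A.natDegree ≤ n`, so that it can be read off
from a linear combination without first computing its degree. -/
lemma eventually_eval_pos_s3 (A : Polynomial ℚ) (n : ℕ) (hn : 1 ≤ n) (hA : A.natDegree ≤ n)
    (hpos : 0 < A.coeff n) : ∃ N : ℤ, ∀ m : ℤ, N ≤ m → 0 < A.eval (m : ℚ) := by
  have hdeg : A.natDegree = n := le_antisymm hA (Polynomial.le_natDegree_of_ne_zero hpos.ne')
  have hlead : 0 ≤ A.leadingCoeff := by
    rw [Polynomial.leadingCoeff, hdeg]
    exact hpos.le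
  have hd : 0 < A.degree := Polynomial.natDegree_pos_iff_degree_pos.mp (by omega)
  have h := (A.tendsto_atTop_of_leadingCoeff_nonneg hd hlead).comp
    (tendsto_intCast_atTop_atTop (R := ℚ))
  exact Filter.eventually_atTop.mp (h.eventually_gt_atTop 0)

lemma not_eventually_eval_nonneg (A : Polynomial ℚ) (n : ℕ) (hn : 1 ≤ n) (hA : A.natDegree ≤ n)
    (hneg : A.coeff n < 0) : ¬ ∃ N : ℤ, ∀ m : ℤ, N ≤ m → 0 ≤ A.eval (m : ℚ) := by
  rintro ⟨N, hN⟩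
  obtain ⟨M, hM⟩ := eventually_eval_pos_s3 (-A) n hn (by simpa using hA) (by simpa using hneg)
  have h1 := hN (max N M) (le_max_left _ _)
  have h2 := hM (max N M) (le_max_right _ _)
  rw [Polynomial.eval_neg] at h2
  linarith

/-- Numerical content of the weak-inequality (semistable) version of Lemma `ReIntSS`: let `d ≥ 1`, `r, s` positive integers,
`ε ∈ {0,1}`, `c > 0` rational, `P, Q ∈ ℚ[x]` of degree `d` with leading coefficients
`r·c` and `s·c`, and `δ ∈ ℚ[x]` with positive leading coefficient and `deg δ ≥ d`.
Then `Q(m)/s + ε·δ(m)/s ≤ P(m)/r + δ(m)/r` for all sufficiently large integers `m`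
iff `Q(m)/(2s - ε) ≤ P(m)/(2r - 1)` for all sufficiently large integers `m`. -/
theorem reinterpret_semistability (d : ℕ) (hd : 1 ≤ d) (r s : ℕ) (hr : 0 < r) (hs : 0 < s)
    (ε : ℕ) (hε : ε = 0 ∨ ε = 1) (c : ℚ) (hc : 0 < c) (P Q δ : Polynomial ℚ)
    (hPdeg : P.degree = (d : ℕ)) (hQdeg : Q.degree = (d : ℕ))
    (hPlead : P.leadingCoeff = r * c) (hQlead : Q.leadingCoeff = s * c)
    (hδ : 0 < δ.leadingCoeff) (hδdeg : (d : ℕ) ≤ δ.natDegree) :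
    (∃ N : ℤ, ∀ m : ℤ, N ≤ m →
        Q.eval (m : ℚ) / s + ε * δ.eval (m : ℚ) / s ≤ P.eval (m : ℚ) / r + δ.eval (m : ℚ) / r)
    ↔ (∃ N : ℤ, ∀ m : ℤ, N ≤ m →
        Q.eval (m : ℚ) / (2 * s - ε) ≤ P.eval (m : ℚ) / (2 * r - 1)) := by
  have hPn : P.natDegree = d := Polynomial.natDegree_eq_of_degree_eq_some hPdeg
  have hQn : Q.natDegree = d := Polynomial.natDegree_eq_of_degree_eq_some hQdeg
  have hPd : P.coeff d = r * c := by rw [← hPlead, Polynomial.leadingCoeff, hPn]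
  have hQd : Q.coeff d = s * c := by rw [← hQlead, Polynomial.leadingCoeff, hQn]
  have hr1 : (1 : ℚ) ≤ r := by exact_mod_cast hr
  have hs1 : (1 : ℚ) ≤ s := by exact_mod_cast hs
  have hε1 : (ε : ℚ) ≤ 1 := by rcases hε with rfl | rfl <;> norm_num
  have hr0 : (0 : ℚ) < r := by linarith
  have hs0 : (0 : ℚ) < s := by linarith
  have h2r : (0 : ℚ) < 2 * r - 1 := by linarith
  have h2s : (0 : ℚ) < 2 * s - ε := by linarith
  set n := δ.natDegree with hn
  obtain ⟨A, hA⟩ : ∃ A : Polynomial ℚ, A = Polynomial.C (1 / r : ℚ) * P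
    + Polynomial.C (1 / r : ℚ) * δ - Polynomial.C (1 / s : ℚ) * Q
    - Polynomial.C (ε / s : ℚ) * δ := ⟨_, rfl⟩
  obtain ⟨B, hB⟩ : ∃ B : Polynomial ℚ, B = Polynomial.C (1 / (2 * r - 1) : ℚ) * P
    - Polynomial.C (1 / (2 * s - ε) : ℚ) * Q := ⟨_, rfl⟩
  have hAeval : ∀ m : ℤ, A.eval (m : ℚ) = P.eval (m : ℚ) / r + δ.eval (m : ℚ) / r
      - (Q.eval (m : ℚ) / s + ε * δ.eval (m : ℚ) / s) := by
    intro m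
    simp only [hA, Polynomial.eval_sub, Polynomial.eval_add, Polynomial.eval_mul,
      Polynomial.eval_C]
    ring
  have hBeval : ∀ m : ℤ, B.eval (m : ℚ) = P.eval (m : ℚ) / (2 * r - 1)
      - Q.eval (m : ℚ) / (2 * s - ε) := by
    intro m
    simp only [hB, Polynomial.eval_sub, Polynomial.eval_mul, Polynomial.eval_C]
    ring
  have hAdeg : A.natDegree ≤ n := by
    have hC : ∀ (a : ℚ) (R : Polynomial ℚ), R.natDegree ≤ n →
        (Polynomial.C a * R).natDegree ≤ n :=
      fun a R h => (Polynomial.natDegree_C_mul_le a R).trans h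
    rw [hA]
    refine (Polynomial.natDegree_sub_le_iff_left (hC _ _ le_rfl)).mpr ?_
    refine (Polynomial.natDegree_sub_le_iff_left (hC _ _ (by omega))).mpr ?_
    exact Polynomial.natDegree_add_le_of_degree_le (hC _ _ (by omega)) (hC _ _ le_rfl)
  have hBdeg : B.natDegree ≤ d := by
    rw [hB]
    exact (Polynomial.natDegree_sub_le_iff_left
      ((Polynomial.natDegree_C_mul_le _ _).trans hQn.le)).mpr
      ((Polynomial.natDegree_C_mul_le _ _).trans hPn.le)
  -- The contributions of `P / r` and `Q / s` cancel in every degree `≥ d`, whether or not `n = d`.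
  have hcancel : P.coeff n / r = Q.coeff n / s := by
    rcases hδdeg.eq_or_lt with h | h
    · rw [← h, hPd, hQd]
      field_simp
    · rw [Polynomial.coeff_eq_zero_of_natDegree_lt (hPn.trans_lt h),
        Polynomial.coeff_eq_zero_of_natDegree_lt (hQn.trans_lt h)]
      simp
  have hAc : A.coeff n = δ.leadingCoeff / (r * s) * (s - ε * r) := by
    have h : A.coeff n = (P.coeff n / r - Q.coeff n / s)
        + δ.coeff n * (1 / r - ε / s) := by
      simp only [hA, Polynomial.coeff_sub, Polynomial.coeff_add, Polynomial.coeff_C_mul]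
      ring
    rw [h, hcancel, Polynomial.leadingCoeff, ← hn]
    field_simp
    ring
  have hBc : B.coeff d = c / ((2 * r - 1) * (2 * s - ε)) * (s - ε * r) := by
    simp only [hB, Polynomial.coeff_sub, Polynomial.coeff_C_mul, hPd, hQd]
    field_simp
    ring
  have hApos : 0 < δ.leadingCoeff / (r * s) := by positivity
  have hBpos : 0 < c / ((2 * r - 1) * (2 * s - ε)) := by positivity
  rcases lt_trichotomy ((s : ℚ) - ε * r) 0 with ht | ht | ht
  · have hA' := not_eventually_eval_nonneg A n (hd.trans hδdeg) hAdeg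
      (hAc ▸ mul_neg_of_pos_of_neg hApos ht)
    have hB' := not_eventually_eval_nonneg B d hd hBdeg
      (hBc ▸ mul_neg_of_pos_of_neg hBpos ht)
    simp only [hAeval, sub_nonneg] at hA'
    simp only [hBeval, sub_nonneg] at hB'
    exact iff_of_false hA' hB'
  · rcases hε with rfl | rfl
    · simp only [Nat.cast_zero, zero_mul, sub_zero] at ht
      exact absurd ht hs0.ne'
    · have hsr : (s : ℚ) = r := by
        rw [Nat.cast_one, one_mul] at ht
        linarith
      simp only [hsr, Nat.cast_one, one_mul, add_le_add_iff_right,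
        div_le_div_iff_of_pos_right hr0, div_le_div_iff_of_pos_right h2r]
  · obtain ⟨N, hN⟩ := eventually_eval_pos_s3 A n (hd.trans hδdeg) hAdeg
      (hAc ▸ mul_pos hApos ht)
    obtain ⟨M, hM⟩ := eventually_eval_pos_s3 B d hd hBdeg (hBc ▸ mul_pos hBpos ht)
    refine iff_of_true ⟨N, fun m hm => ?_⟩ ⟨M, fun m hm => ?_⟩
    · have := hN m hm
      rw [hAeval] at this
      linarith
    · have := hM m hm
      rw [hBeval] at this
      linarith
end

section
/- Let R be a commutative ring and φ : P → Q an R-linear map between finitely generated projective R-modules. Suppose that for every prime ideal 𝔭 of R, the induced map P ⊗_R κ(𝔭) → Q ⊗_R κ(𝔭) is injective, where κ(𝔭) denotes the residue field of R at 𝔭. Then the cokernel of φ is a finitely generated projective R-module. -/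
/-!
Projectivity of a finitely presented module can be checked at the localizations at maximal
ideals. The cokernel `C` of `φ` is finitely presented. For a maximal ideal `𝔪`, the sequence
`P_𝔪 → Q_𝔪 → C_𝔪 → 0` is exact with `Q_𝔪` free of finite rank. Tensoring it with the
residue field of `R_𝔪` turns its first map into `φ ⊗ κ(𝔪)`, which is injective by hypothesis,
so `Tor₁(κ(𝔪), C_𝔪)` vanishes and the local criterion
(`Module.free_of_lTensor_residueField_injective`) makes `C_𝔪` free.
-/

open TensorProduct in
/-- The canonical isomorphism `B ⊗[A] (A ⊗[R] M) ≃ B ⊗[R] M`, natural in `M`, identifies the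
base change of `f` through `A` with its direct base change to `B`. -/
lemma lTensor_baseChange_injective {R A B M N : Type*} [CommRing R] [CommRing A] [CommRing B]
    [Algebra R A] [Algebra A B] [Algebra R B] [IsScalarTower R A B]
    [AddCommGroup M] [Module R M] [AddCommGroup N] [Module R N] (f : M →ₗ[R] N)
    (hf : Function.Injective (f.baseChange B)) :
    Function.Injective ((f.baseChange A).lTensor B) := by
  let eM := AlgebraTensorModule.cancelBaseChange R A B B M
  let eN := AlgebraTensorModule.cancelBaseChange R A B B N
  have key : eN.toLinearMap ∘ₗ (f.baseChange A).baseChange B =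
      f.baseChange B ∘ₗ eM.toLinearMap := by
    ext
    simp [eM, eN]
  have h : Function.Injective (eN ∘ (f.baseChange A).baseChange B) := by
    have h' : Function.Injective (f.baseChange B ∘ eM) := hf.comp eM.injective
    convert h' using 1
    exact congrArg DFunLike.coe key
  exact h.of_comp

/-- A map of finitely generated projective modules over a commutative ring which is
injective on fibers at every prime (i.e. after base change to every residue field
`κ(𝔭)`) has finitely generated projective cokernel. -/
theorem cokernel_projective_of_fiberwise_injective (R : Type*) [CommRing R]
    (P Q : Type*) [AddCommGroup P] [AddCommGroup Q] [Module R P] [Module R Q]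
    [Module.Finite R P] [Module.Projective R P] [Module.Finite R Q] [Module.Projective R Q]
    (φ : P →ₗ[R] Q)
    (h : ∀ (𝔭 : Ideal R) [𝔭.IsPrime],
      Function.Injective
        (LinearMap.baseChange (IsLocalRing.ResidueField (Localization.AtPrime 𝔭)) φ)) :
    Module.Finite R (Q ⧸ LinearMap.range φ) ∧ Module.Projective R (Q ⧸ LinearMap.range φ) := by
  refine ⟨inferInstance, ?_⟩
  have : Module.FinitePresentation R Q := Module.finitePresentation_of_projective R Q
  have : Module.FinitePresentation R (Q ⧸ LinearMap.range φ) :=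
    Module.finitePresentation_of_surjective _ (Submodule.mkQ_surjective _) (by
      rw [Submodule.ker_mkQ, LinearMap.range_eq_map]
      exact Module.Finite.fg_top.map φ)
  refine Module.projective_of_localization_maximal'
    (fun 𝔪 _ ↦ Localization.AtPrime 𝔪)
    (fun 𝔪 _ ↦ TensorProduct R (Localization.AtPrime 𝔪) (Q ⧸ LinearMap.range φ))
    (fun 𝔪 _ ↦ TensorProduct.mk R (Localization.AtPrime 𝔪) _ 1) fun 𝔪 _ ↦ ?_
  have : Module.Free (Localization.AtPrime 𝔪) (TensorProduct R (Localization.AtPrime 𝔪) Q) :=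
    Module.free_of_flat_of_isLocalRing
  have := Module.free_of_lTensor_residueField_injective
    (φ.baseChange (Localization.AtPrime 𝔪))
    ((LinearMap.range φ).mkQ.baseChange (Localization.AtPrime 𝔪))
    (LinearMap.lTensor_surjective _ (Submodule.mkQ_surjective _))
    (lTensor_exact _ φ.exact_map_mkQ_range (Submodule.mkQ_surjective _))
    (lTensor_baseChange_injective φ (h 𝔪))
  infer_instance
end
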